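/- depth R/I = 1 if and only if there is a partition V = A ⊔ B of the vertex set into two nonempty sets such that every vertex of A is adjacent in Γ to every vertex of B. -/

import Mathlib

open MvPolynomial

noncomputable section

/-- The edge ideal of a graph `Γ` on vertex set `σ`, in `k[x_i : i ∈ σ]`. -/
def edgeIdeal (k : Type) [Field k] {σ : Type} (Γ : SimpleGraph σ) :
    Ideal (MvPolynomial σ k) :=
  Ideal.span { m | ∃ i j : σ, Γ.Adj i j ∧ m = X i * X j }

/-- The maximal graded ideal `(x_i : i ∈ σ)` of `k[x_i : i ∈ σ]`. -/
def maxIdeal (k : Type) [Field k] (σ : Type) : Ideal (MvPolynomial σ k) :=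
  Ideal.span (Set.range (X : σ → MvPolynomial σ k))

/-- `depth R/J = 0`, i.e. the maximal graded ideal is an associated prime of `R/J`. -/
def DepthZero (k : Type) [Field k] {σ : Type} (J : Ideal (MvPolynomial σ k)) : Prop :=
  maxIdeal k σ ∈ associatedPrimes (MvPolynomial σ k) (MvPolynomial σ k ⧸ J)

/-- The `i`-th local cohomology of `R/J` with support in the maximal graded ideal. -/
def locCoh (k : Type) [Field k] {σ : Type} (J : Ideal (MvPolynomial σ k)) (i : ℕ) :=
  (localCohomology (maxIdeal k σ) i).obj (ModuleCat.of _ (MvPolynomial σ k ⧸ J))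

/-- `depth R/J`, defined as the least `i` with `H^i_m(R/J) ≠ 0`. -/
def rDepth (k : Type) [Field k] {σ : Type} (J : Ideal (MvPolynomial σ k)) : ℕ :=
  sInf { i | Nontrivial (locCoh k J i) }

/-- A set `U` of vertices is dominating: every vertex outside `U` is adjacent to a
vertex of `U`. -/
def Dominating {σ : Type} (Γ : SimpleGraph σ) (U : Set σ) : Prop :=
  ∀ v ∉ U, ∃ u ∈ U, Γ.Adj u v

/-- The closed neighborhood `N[v]` of a vertex. -/
def closedNbhd {σ : Type} (Γ : SimpleGraph σ) (v : σ) : Set σ :=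
  insert v { u | Γ.Adj v u }

/-- The closed neighborhood `N[C]` of a set of vertices. -/
def closedNbhdSet {σ : Type} (Γ : SimpleGraph σ) (C : Set σ) : Set σ :=
  ⋃ v ∈ C, closedNbhd Γ v

/-- An odd cycle of length `m` (given as an injective map `ZMod m → σ` with consecutive
vertices adjacent) in `Γ`. -/
def IsOddCycle {σ : Type} (Γ : SimpleGraph σ) (m : ℕ) (c : ZMod m → σ) : Prop :=
  Odd m ∧ 3 ≤ m ∧ Function.Injective c ∧ ∀ i, Γ.Adj (c i) (c (i + 1))

/-- `F` is an independent set of `Γ`. -/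
def IsIndep {σ : Type} [Fintype σ] [DecidableEq σ] (Γ : SimpleGraph σ) (F : Finset σ) : Prop :=
  ∀ i ∈ F, ∀ j ∈ F, ¬ Γ.Adj i j

/-- `F` is a maximal independent set of `Γ`. -/
def IsMaxIndep {σ : Type} [Fintype σ] [DecidableEq σ] (Γ : SimpleGraph σ) (F : Finset σ) : Prop :=
  IsIndep Γ F ∧ ∀ G : Finset σ, IsIndep Γ G → F ⊆ G → G = F

/-- The prime ideal `P_F = (x_i : i ∉ F)`. -/
def PF (k : Type) [Field k] {σ : Type} [Fintype σ] [DecidableEq σ] (F : Finset σ) :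
    Ideal (MvPolynomial σ k) :=
  Ideal.span { m | ∃ i ∉ F, m = X i }

/-- The `t`-th symbolic power `I^{(t)} = ⋂_{F maximal independent} P_F^t` of the edge ideal. -/
def symbPow (k : Type) [Field k] {σ : Type} [Fintype σ] [DecidableEq σ]
    (Γ : SimpleGraph σ) (t : ℕ) : Ideal (MvPolynomial σ k) :=
  ⨅ F ∈ { F : Finset σ | IsMaxIndep Γ F }, PF k F ^ t

/-- The monomial `x^a`. -/
def xPow (k : Type) [Field k] {σ : Type} [Fintype σ] (a : σ → ℕ) : MvPolynomial σ k :=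
  ∏ i, X i ^ a i

/-- The localization `R[x_i^{-1} : i ∈ F]`. -/
abbrev locAt (k : Type) [Field k] {σ : Type} (F : Finset σ) :=
  Localization (Submonoid.closure ((fun i => (X i : MvPolynomial σ k)) '' (F : Set σ)))

/-- The degree complex `Δ_a(J) = {F : x^a ∉ J·R[x_i^{-1} : i ∈ F]}` of a monomial ideal `J`. -/
def degComplex (k : Type) [Field k] {σ : Type} [Fintype σ] (J : Ideal (MvPolynomial σ k))
    (a : σ → ℕ) : Set (Finset σ) :=
  { F | algebraMap (MvPolynomial σ k) (locAt k F) (xPow k a) ∉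
      J.map (algebraMap (MvPolynomial σ k) (locAt k F)) }

/-- `F` is a facet (maximal face) of the complex `Δ`. -/
def IsFacet {σ : Type} (Δ : Set (Finset σ)) (F : Finset σ) : Prop :=
  F ∈ Δ ∧ ∀ G ∈ Δ, F ⊆ G → G = F

/-- The complex `Δ` is disconnected: its vertex set splits into two nonempty parts such that
no face meets both. -/
def ComplexDisconnected {σ : Type} (Δ : Set (Finset σ)) : Prop :=
  ∃ A B : Set σ, A.Nonempty ∧ B.Nonempty ∧ Disjoint A B ∧
    (∀ i, {i} ∈ Δ ↔ i ∈ A ∪ B) ∧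
    ∀ F ∈ Δ, ¬ ((∃ i ∈ F, i ∈ A) ∧ (∃ j ∈ F, j ∈ B))

/-- The polynomial ring `R_v = k[x_i : i ≠ v]`. -/
abbrev Rv (k : Type) [Field k] {σ : Type} (v : σ) := MvPolynomial { i : σ // i ≠ v } k

/-- The localization `R[x_v^{-1}]`. -/
abbrev LocAway (k : Type) [Field k] {σ : Type} (v : σ) :=
  Localization.Away (X v : MvPolynomial σ k)

/-- For an ideal `I` of `R`, the ideal `I_v = I·R[x_v^{-1}] ∩ R_v` of `R_v`. -/
def idealV (k : Type) [Field k] {σ : Type} (I : Ideal (MvPolynomial σ k)) (v : σ) :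
    Ideal (Rv k v) :=
  Ideal.comap ((algebraMap (MvPolynomial σ k) (LocAway k v)).comp
      (MvPolynomial.rename (Subtype.val : { i : σ // i ≠ v } → σ)).toRingHom)
    (I.map (algebraMap (MvPolynomial σ k) (LocAway k v)))

/-- The edge ideal of the induced subgraph `Γ_U` in `k[x_i : i ∈ U]`. -/
def edgeIdealOn (k : Type) [Field k] {σ : Type} (Γ : SimpleGraph σ) (U : Set σ) :
    Ideal (MvPolynomial U k) :=
  Ideal.span { m | ∃ i j : U, Γ.Adj (i : σ) (j : σ) ∧ m = X i * X j }

/-- `Γ` has no isolated vertices. -/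
def NoIsolated {σ : Type} (Γ : SimpleGraph σ) : Prop :=
  ∀ v : σ, ∃ u : σ, Γ.Adj v u

/-!
Write `R = k[x_i]`, `m = (x_i)` and `I` for the edge ideal. Since `R` is projective, the sequences
`0 → mˢ → R → R/mˢ → 0` identify `H¹_m(R/I)` with the colimit of the modules of homomorphisms
`mˢ → R/I` modulo those that extend to `R`. When there is a vertex, `R/I` has no element killed by
`m`; hence `H⁰_m(R/I) = 0`, and if every homomorphism `m → R/I` extends to `R`, then so does every
homomorphism `mˢ → R/I`.

A homomorphism `φ : m → R/I` is a family `hᵢ = φ(xᵢ)` with `xⱼ hᵢ = xᵢ hⱼ`. The monomials with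
independent support form a basis of `R/I`; comparing coefficients shows that `hᵢ = xᵢ H` for a
common `H`, except that the coefficients of `xᵢ` in `hᵢ` need only agree for nonadjacent vertices.
They are all equal unless the complement of `Γ` is disconnected, that is, unless `Γ` is a join. For
a join on `A ⊔ B`, setting the variables in `B` to zero is `R`-linear on `m` modulo `I`, because
`(x_a : a ∈ A) (x_b : b ∈ B) ⊆ I`, and its restriction to `mᵗ` extends to `R` for no `t ≥ 1`.
-/

section Splice

open CategoryTheory Limits

universe v u

variable {C : Type u} [Category.{v} C] [Abelian C] {X : C}

/-- The augmentation `P₀ ⟶ X` of a projective resolution of `X`. -/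
def augmentation (P : ProjectiveResolution X) : P.complex.X 0 ⟶ X := P.π.f 0

instance epi_augmentation (P : ProjectiveResolution X) : Epi (augmentation P) :=
  inferInstanceAs (Epi (P.π.f 0))

lemma d_comp_augmentation (P : ProjectiveResolution X) :
    P.complex.d 1 0 ≫ augmentation P = 0 :=
  P.complex_d_comp_π_f_zero

lemma exact_d_augmentation (P : ProjectiveResolution X) :
    (ShortComplex.mk _ _ (d_comp_augmentation P)).Exact :=
  P.exact₀

variable {S S' : ShortComplex C}

/-- The complex `⋯ ⟶ P₁ ⟶ P₀ ⟶ S.X₂` obtained by splicing a resolution `P` of `S.X₁` with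
`S.f : S.X₁ ⟶ S.X₂`. -/
abbrev splice (S : ShortComplex C) (P : ProjectiveResolution S.X₁) : ChainComplex C ℕ :=
  P.complex.augment (augmentation P ≫ S.f) (by
    rw [← Category.assoc, d_comp_augmentation, zero_comp])

lemma splice_exactAt_succ (hS : S.ShortExact) (P : ProjectiveResolution S.X₁) (n : ℕ) :
    (splice S P).ExactAt (n + 1) := by
  rw [HomologicalComplex.exactAt_iff' _ (n + 2) (n + 1) n (by simp) (by simp)]
  cases n with
  | zero =>
    let ι : ShortComplex.mk _ _ (d_comp_augmentation P) ⟶ (splice S P).sc' 2 1 0 :=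
      { τ₁ := 𝟙 _
        τ₂ := 𝟙 _
        τ₃ := S.f
        comm₁₂ := (Category.id_comp _).trans (Category.comp_id _).symm
        comm₂₃ := Category.id_comp _ }
    have : Epi ι.τ₁ := inferInstanceAs (Epi (𝟙 _))
    have : IsIso ι.τ₂ := inferInstanceAs (IsIso (𝟙 _))
    have : Mono ι.τ₃ := hS.mono_f
    exact (ShortComplex.exact_iff_of_epi_of_isIso_of_mono ι).1 (exact_d_augmentation P)
  | succ n => exact P.exact_succ n

lemma augmentation_comp_f_comp_g (P : ProjectiveResolution S.X₁) :
    (augmentation P ≫ S.f) ≫ S.g = 0 := by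
  rw [Category.assoc, S.zero, comp_zero]

lemma splice_exact_zero (hS : S.ShortExact) (P : ProjectiveResolution S.X₁) :
    (ShortComplex.mk _ _ (augmentation_comp_f_comp_g P)).Exact := by
  let π : ShortComplex.mk _ _ (augmentation_comp_f_comp_g P) ⟶ S :=
    { τ₁ := augmentation P
      τ₂ := 𝟙 _
      τ₃ := 𝟙 _ }
  exact (ShortComplex.exact_iff_of_epi_of_isIso_of_mono π).2 hS.exact

/-- The projective resolution of `S.X₃` obtained from a short exact sequence `S` with `S.X₂`
projective and a projective resolution of `S.X₁`. -/
def spliceResolution (hS : S.ShortExact) [Projective S.X₂] (P : ProjectiveResolution S.X₁) :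
    ProjectiveResolution S.X₃ where
  complex := splice S P
  projective
    | 0 => inferInstanceAs (Projective S.X₂)
    | n + 1 => P.projective n
  π := (ChainComplex.toSingle₀Equiv _ _).symm ⟨S.g, augmentation_comp_f_comp_g P⟩
  quasiIso := ⟨fun n => by
    cases n
    · rw [ChainComplex.quasiIsoAt₀_iff, ShortComplex.quasiIso_iff_of_zeros']
      · refine (ShortComplex.exact_and_epi_g_iff_of_iso ?_).2 ⟨splice_exact_zero hS P, hS.epi_g⟩
        exact ShortComplex.isoMk (Iso.refl _) (Iso.refl _) (Iso.refl _)
          ((Category.id_comp _).trans (Category.comp_id _).symm)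
          ((Category.id_comp _).trans ((ChainComplex.toSingle₀Equiv_symm_apply_f_zero
            (C := splice S P) S.g (augmentation_comp_f_comp_g P)).symm.trans
              (Category.comp_id _).symm))
      all_goals rfl
    · rw [quasiIsoAt_iff_exactAt']
      · exact splice_exactAt_succ hS P _
      · apply ChainComplex.exactAt_succ_single_obj⟩

lemma augmentation_spliceResolution (hS : S.ShortExact) [Projective S.X₂]
    (P : ProjectiveResolution S.X₁) : augmentation (spliceResolution hS P) = S.g :=
  ChainComplex.toSingle₀Equiv_symm_apply_f_zero (C := splice S P) S.g (augmentation_comp_f_comp_g P)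

/-- The map of spliced complexes induced by a map of short complexes and a chain map lifting its
first component. -/
def spliceMap (τ : S' ⟶ S) {Q : ProjectiveResolution S'.X₁} {P : ProjectiveResolution S.X₁}
    (l : Q.complex ⟶ P.complex) (hl : l.f 0 ≫ augmentation P = augmentation Q ≫ τ.τ₁) :
    splice S' Q ⟶ splice S P where
  f
    | 0 => τ.τ₂
    | n + 1 => l.f n
  comm'
    | _, 0, rfl => by
      change l.f 0 ≫ augmentation P ≫ S.f = (augmentation Q ≫ S'.f) ≫ τ.τ₂
      rw [← Category.assoc, hl, Category.assoc, Category.assoc, τ.comm₁₂]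
    | _, n + 1, rfl => l.comm (n + 1) n

end Splice

section ExtClass

open CategoryTheory Limits Opposite

universe v u

variable {R : Type*} [CommRing R] {C : Type u} [Category.{v} C] [Abelian C] [Linear R C] {X Y : C}

variable (R) in
/-- The complex `Hom(P, M)` computing `Ext(X, M)` from a projective resolution `P` of `X`. It is a
chain complex in the opposite category, because `Ext` is defined as a left derived functor with
values there. -/
abbrev homComplex (P : ProjectiveResolution X) (M : C) : ChainComplex (ModuleCat.{v} R)ᵒᵖ ℕ :=
  (((linearYoneda R C).obj M).rightOp.mapHomologicalComplex _).obj P.complex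

variable (R) in
/-- The module of `n`-cocycles of `Hom(P, M)`. -/
abbrev extCocycles (P : ProjectiveResolution X) (M : C) (n : ℕ) : ModuleCat.{v} R :=
  ((homComplex R P M).opcycles n).unop

variable (R) in
/-- The inclusion of the `n`-cocycles into the `n`-cochains `Hom(Pₙ, M)`. -/
def extCocyclesι (P : ProjectiveResolution X) (M : C) (n : ℕ) :
    extCocycles R P M n ⟶ ModuleCat.of R (P.complex.X n ⟶ M) :=
  ((homComplex R P M).pOpcycles n).unop

variable (P : ProjectiveResolution X) (Q : ProjectiveResolution Y) (M : C) {n : ℕ}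

lemma extCocyclesι_injective (n : ℕ) : Function.Injective (extCocyclesι R P M n) :=
  (ModuleCat.mono_iff_injective _).1 (unop_mono_of_epi ((homComplex R P M).pOpcycles n))

variable {M}

lemma exists_extCocyclesι_eq_iff (φ : P.complex.X n ⟶ M) :
    (∃ z, extCocyclesι R P M n z = φ) ↔ P.complex.d (n + 1) n ≫ φ = 0 := by
  have exact : (ShortComplex.mk _ _ ((homComplex R P M).d_pOpcycles (n + 1) n)).Exact :=
    ShortComplex.exact_of_g_is_cokernel _
      ((homComplex R P M).opcyclesIsCokernel (n + 1) n (by simp))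
  exact ((ShortComplex.ShortExact.moduleCat_exact_iff_function_exact _).1 exact.unop φ).symm

variable [EnoughProjectives C]

variable (R) in
/-- The `n`-th cohomology of `Hom(P, M)` is `Extⁿ(X, M)`. -/
def extIso (P : ProjectiveResolution X) (M : C) (n : ℕ) :
    ((homComplex R P M).homology n).unop ≅ ((Ext R C n).obj (op X)).obj M :=
  (P.isoLeftDerivedObj _ n).unop

variable (R) in
/-- The projection of the `n`-cocycles onto `Extⁿ(X, M)`. -/
def extCocyclesπ (P : ProjectiveResolution X) (M : C) (n : ℕ) :
    extCocycles R P M n ⟶ ((Ext R C n).obj (op X)).obj M :=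
  ((homComplex R P M).homologyι n).unop ≫ (extIso R P M n).hom

lemma extCocyclesπ_surjective (n : ℕ) : Function.Surjective (extCocyclesπ R P M n) :=
  have := unop_epi_of_mono ((homComplex R P M).homologyι n)
  (ModuleCat.epi_iff_surjective _).1 (epi_comp _ _)

lemma extCocyclesπ_eq_zero_iff (z : extCocycles R P M (n + 1)) :
    extCocyclesπ R P M (n + 1) z = 0 ↔
      ∃ ψ : P.complex.X n ⟶ M, P.complex.d (n + 1) n ≫ ψ = extCocyclesι R P M (n + 1) z := by
  let K := homComplex R P M
  have exact : (ShortComplex.mk _ _ (K.homologyι_comp_fromOpcycles (n + 1) n)).Exact :=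
    ShortComplex.exact_of_f_is_kernel _ (K.homologyIsKernel (n + 1) n (by simp))
  have d_eq (ψ : P.complex.X n ⟶ M) : P.complex.d (n + 1) n ≫ ψ =
      extCocyclesι R P M (n + 1) ((K.fromOpcycles (n + 1) n).unop ψ) :=
    (ConcreteCategory.congr_hom (congrArg Quiver.Hom.unop (K.p_fromOpcycles (n + 1) n)) ψ).symm
  calc extCocyclesπ R P M (n + 1) z = 0
      ↔ (K.homologyι (n + 1)).unop z = 0 :=
        map_eq_zero_iff (extIso R P M (n + 1)).hom.hom
          ((ModuleCat.mono_iff_injective _).1 inferInstance)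
    _ ↔ ∃ ψ : P.complex.X n ⟶ M, (K.fromOpcycles (n + 1) n).unop ψ = z :=
        (ShortComplex.ShortExact.moduleCat_exact_iff_function_exact _).1 exact.unop z
    _ ↔ _ := by simp only [d_eq, (extCocyclesι_injective P M (n + 1)).eq_iff]

/-- The class in `Extⁿ(X, M)` of a cocycle `φ : Pₙ ⟶ M`. -/
def extClass (φ : P.complex.X n ⟶ M) (hφ : P.complex.d (n + 1) n ≫ φ = 0) :
    ((Ext R C n).obj (op X)).obj M :=
  extCocyclesπ R P M n ((exists_extCocyclesι_eq_iff P φ).2 hφ).choose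

lemma extClass_congr {φ φ' : P.complex.X n ⟶ M} (h : φ = φ')
    (hφ : P.complex.d (n + 1) n ≫ φ = 0) :
    extClass (R := R) P φ hφ = extClass P φ' (h ▸ hφ) := by
  subst h
  rfl

lemma extCocyclesπ_eq_extClass {z : extCocycles R P M n} {φ : P.complex.X n ⟶ M}
    (h : extCocyclesι R P M n z = φ) :
    extCocyclesπ R P M n z = extClass P φ ((exists_extCocyclesι_eq_iff P φ).1 ⟨z, h⟩) :=
  congrArg _ (extCocyclesι_injective P M n
    (h.trans (((exists_extCocyclesι_eq_iff P φ).2 ((exists_extCocyclesι_eq_iff P φ).1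
      ⟨z, h⟩)).choose_spec).symm))

lemma exists_extClass_eq (e : ((Ext R C n).obj (op X)).obj M) :
    ∃ φ hφ, extClass P φ hφ = e := by
  obtain ⟨z, rfl⟩ := extCocyclesπ_surjective P n e
  exact ⟨_, _, (extCocyclesπ_eq_extClass P rfl).symm⟩

lemma extClass_eq_zero_iff (φ : P.complex.X (n + 1) ⟶ M)
    (hφ : P.complex.d (n + 2) (n + 1) ≫ φ = 0) :
    extClass (R := R) P φ hφ = 0 ↔ ∃ ψ : P.complex.X n ⟶ M, P.complex.d (n + 1) n ≫ ψ = φ := by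
  obtain ⟨z, hz⟩ := (exists_extCocyclesι_eq_iff (R := R) P φ).2 hφ
  rw [← extCocyclesπ_eq_extClass P hz, extCocyclesπ_eq_zero_iff, hz]

lemma extClass_zero : extClass (R := R) P (0 : P.complex.X n ⟶ M) comp_zero = 0 := by
  rw [← extCocyclesπ_eq_extClass P (map_zero (extCocyclesι R P M n).hom)]
  exact map_zero (extCocyclesπ R P M n).hom

lemma map_extClass (g : Y ⟶ X) (l : Q.complex ⟶ P.complex)
    (comm : l.f 0 ≫ augmentation P = augmentation Q ≫ g) (φ : P.complex.X n ⟶ M)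
    (hφ : P.complex.d (n + 1) n ≫ φ = 0) :
    ((Ext R C n).map g.op).app M (extClass P φ hφ) =
      extClass Q (l.f n ≫ φ) (by rw [← l.comm_assoc, hφ, comp_zero]) := by
  obtain ⟨z, hz⟩ := (exists_extCocyclesι_eq_iff (R := R) P φ).2 hφ
  let F := ((linearYoneda R C).obj M).rightOp
  let L : homComplex R Q M ⟶ homComplex R P M := (F.mapHomologicalComplex _).map l
  have ι_nat : extCocyclesι R Q M n ((HomologicalComplex.opcyclesMap L n).unop z) = l.f n ≫ φ := by
    rw [← hz]
    exact ConcreteCategory.congr_hom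
      (congrArg Quiver.Hom.unop (HomologicalComplex.p_opcyclesMap L n)) z
  have homologyι_nat : ((homComplex R P M).homologyι n).unop ≫
      (HomologicalComplex.homologyMap L n).unop =
        (HomologicalComplex.opcyclesMap L n).unop ≫ ((homComplex R Q M).homologyι n).unop :=
    congrArg Quiver.Hom.unop (HomologicalComplex.homologyι_naturality L n)
  have extIso_nat : (extIso R P M n).hom ≫ ((Ext R C n).map g.op).app M =
      (HomologicalComplex.homologyMap L n).unop ≫ (extIso R Q M n).hom :=
    congrArg Quiver.Hom.unop
      (ProjectiveResolution.isoLeftDerivedObj_hom_naturality g Q P l comm F n)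
  have π_nat : extCocyclesπ R P M n ≫ ((Ext R C n).map g.op).app M =
      (HomologicalComplex.opcyclesMap L n).unop ≫ extCocyclesπ R Q M n := by
    rw [extCocyclesπ, extCocyclesπ, Category.assoc, extIso_nat, ← Category.assoc, homologyι_nat,
      Category.assoc]
  rw [← extCocyclesπ_eq_extClass P hz, ← extCocyclesπ_eq_extClass Q ι_nat]
  exact ConcreteCategory.congr_hom π_nat z

lemma ext_zero_eq_zero (hXM : ∀ f : X ⟶ M, f = 0) (e : ((Ext R C 0).obj (op X)).obj M) :
    e = 0 := by
  obtain ⟨φ, hφ, rfl⟩ := exists_extClass_eq (ProjectiveResolution.of X) e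
  have hφ0 : φ = 0 := by
    rw [← (exact_d_augmentation _).g_desc φ hφ, hXM ((exact_d_augmentation _).desc φ hφ), comp_zero]
  subst hφ0
  exact extClass_zero _

end ExtClass

section ConnectingClass

open CategoryTheory Limits Opposite

universe v u

variable {R : Type*} [CommRing R] {C : Type u} [Category.{v} C] [Abelian C] [Linear R C]
  [EnoughProjectives C] {S S' : ShortComplex C} {M : C}

variable (R) in
/-- The image of `φ : S.X₁ ⟶ M` under the connecting map `Hom(S.X₁, M) ⟶ Ext¹(S.X₃, M)` of a
short exact sequence `S` with `S.X₂` projective, computed with a projective resolution of `S.X₁`. -/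
def connectingClass (hS : S.ShortExact) [Projective S.X₂] (P : ProjectiveResolution S.X₁)
    (φ : S.X₁ ⟶ M) : ((Ext R C 1).obj (op S.X₃)).obj M :=
  extClass (spliceResolution hS P) (n := 1) (augmentation P ≫ φ)
    ((Category.assoc _ _ _).symm.trans ((congrArg (· ≫ φ) (d_comp_augmentation P)).trans zero_comp))

lemma connectingClass_eq_zero_iff (hS : S.ShortExact) [Projective S.X₂]
    (P : ProjectiveResolution S.X₁) (φ : S.X₁ ⟶ M) :
    connectingClass R hS P φ = 0 ↔ ∃ ψ : S.X₂ ⟶ M, S.f ≫ ψ = φ :=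
  calc connectingClass R hS P φ = 0
    _ ↔ ∃ ψ : S.X₂ ⟶ M, (augmentation P ≫ S.f) ≫ ψ = augmentation P ≫ φ :=
      extClass_eq_zero_iff (spliceResolution hS P) (n := 0) _ _
    _ ↔ _ := by simp only [Category.assoc, cancel_epi]

lemma exists_connectingClass_eq (hS : S.ShortExact) [Projective S.X₂]
    (P : ProjectiveResolution S.X₁) (e : ((Ext R C 1).obj (op S.X₃)).obj M) :
    ∃ φ : S.X₁ ⟶ M, connectingClass R hS P φ = e := by
  obtain ⟨c, hc, rfl⟩ := exists_extClass_eq (spliceResolution hS P) e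
  exact ⟨(exact_d_augmentation P).desc c hc,
    extClass_congr (spliceResolution hS P) ((exact_d_augmentation P).g_desc c hc) _⟩

lemma map_connectingClass (hS : S.ShortExact) [Projective S.X₂] (P : ProjectiveResolution S.X₁)
    (hS' : S'.ShortExact) [Projective S'.X₂] (P' : ProjectiveResolution S'.X₁) (τ : S' ⟶ S)
    (φ : S.X₁ ⟶ M) :
    ((Ext R C 1).map τ.τ₃.op).app M (connectingClass R hS P φ) =
      connectingClass R hS' P' (τ.τ₁ ≫ φ) := by
  obtain ⟨l, hl⟩ : ∃ l : P'.complex ⟶ P.complex,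
      l.f 0 ≫ augmentation P = augmentation P' ≫ τ.τ₁ :=
    ⟨ProjectiveResolution.lift τ.τ₁ P' P, ProjectiveResolution.lift_commutes_zero τ.τ₁ P' P⟩
  have comm : (spliceMap τ l hl).f 0 ≫ augmentation (spliceResolution hS P) =
      augmentation (spliceResolution hS' P') ≫ τ.τ₃ := by
    rw [augmentation_spliceResolution, augmentation_spliceResolution]
    exact τ.comm₂₃
  have comp_eq : l.f 0 ≫ augmentation P ≫ φ = augmentation P' ≫ τ.τ₁ ≫ φ := by
    rw [← Category.assoc, hl, Category.assoc]
  exact (map_extClass (spliceResolution hS P) (spliceResolution hS' P') τ.τ₃ (spliceMap τ l hl)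
    comm _ _).trans (extClass_congr (spliceResolution hS' P') comp_eq _)

end ConnectingClass

section ExtendsToRing

variable {R M : Type*} [CommRing R] [AddCommGroup M] [Module R M] {J : Ideal R}

/-- A linear map `φ : J → M` on an ideal extends to the whole ring, i.e. it is given by
multiplication with some `x : M`. -/
def ExtendsToRing (φ : J →ₗ[R] M) : Prop :=
  ∃ x : M, ∀ r : J, φ r = (r : R) • x

lemma extendsToRing_span_range {ι : Type*} {f : ι → R} (φ : Ideal.span (Set.range f) →ₗ[R] M)
    {x : M} (h : ∀ i, φ ⟨f i, Ideal.subset_span ⟨i, rfl⟩⟩ = f i • x) : ExtendsToRing φ := by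
  refine ⟨x, fun ⟨r, hr⟩ => ?_⟩
  induction hr using Submodule.span_induction with
  | mem r hr =>
    obtain ⟨i, rfl⟩ := hr
    exact h i
  | zero => exact (map_zero φ).trans (zero_smul R x).symm
  | add r s hr hs ihr ihs =>
    exact (map_add φ ⟨r, hr⟩ ⟨s, hs⟩).trans (by rw [ihr, ihs, ← add_smul])
  | smul q r hr ih =>
    exact (map_smul φ q ⟨r, hr⟩).trans (by rw [ih, smul_smul])

lemma torsionBySet_pow_eq_bot (h : Submodule.torsionBySet R M (J : Set R) = ⊥) (t : ℕ) :
    Submodule.torsionBySet R M ((J ^ t : Ideal R) : Set R) = ⊥ := by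
  simp only [Submodule.eq_bot_iff, Submodule.mem_torsionBySet_iff, Subtype.forall,
    SetLike.mem_coe] at h ⊢
  induction t with
  | zero => exact fun x hx => by simpa using hx 1 (by simp)
  | succ t ih =>
    refine fun x hx => h x fun r hr => ih _ fun q hq => ?_
    rw [smul_smul]
    exact hx _ (pow_succ J t ▸ Ideal.mul_mem_mul hq hr)

lemma exists_forall_smul_eq (h : Submodule.torsionBySet R M (J : Set R) = ⊥)
    (hJ : ∀ φ : J →ₗ[R] M, ExtendsToRing φ) {N : Type*} [AddCommGroup N] [Module R N]
    (φ : N →ₗ[R] J →ₗ[R] M) :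
    ∃ ψ : N →ₗ[R] M, ∀ (n : N) (r : J), φ n r = (r : R) • ψ n := by
  have cancel {x y : M} (hxy : ∀ r : J, (r : R) • x = (r : R) • y) : x = y := by
    rw [← sub_eq_zero, ← Submodule.mem_bot R, ← h, Submodule.mem_torsionBySet_iff]
    exact fun r => by rw [smul_sub, sub_eq_zero]; exact hxy r
  choose ψ hψ using fun n => hJ (φ n)
  refine ⟨⟨⟨ψ, fun n n' => cancel fun r => ?_⟩, fun q n => cancel fun r => ?_⟩, hψ⟩
  · rw [smul_add, ← hψ, ← hψ, ← hψ, map_add, LinearMap.add_apply]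
  · rw [RingHom.id_apply, smul_comm, ← hψ, ← hψ, map_smul, LinearMap.smul_apply]

lemma extendsToRing_pow (h : Submodule.torsionBySet R M (J : Set R) = ⊥)
    (hJ : ∀ φ : J →ₗ[R] M, ExtendsToRing φ) (t : ℕ) (φ : ↥(J ^ t) →ₗ[R] M) :
    ExtendsToRing φ := by
  induction t with
  | zero =>
    refine ⟨φ ⟨1, by simp⟩, fun r => ?_⟩
    rw [← map_smul]
    congr 1
    ext
    simp
  | succ t ih =>
    let mulMap : ↥(J ^ t) →ₗ[R] J →ₗ[R] ↥(J ^ (t + 1)) :=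
      LinearMap.mk₂ R (fun q r => ⟨q * r, pow_succ J t ▸ Ideal.mul_mem_mul q.2 r.2⟩)
        (fun _ _ _ => Subtype.ext (add_mul _ _ _)) (fun _ _ _ => Subtype.ext (smul_mul_assoc _ _ _))
        (fun _ _ _ => Subtype.ext (mul_add _ _ _)) (fun _ _ _ => Subtype.ext (mul_smul_comm _ _ _))
    obtain ⟨ψ, hψ⟩ := exists_forall_smul_eq h hJ (mulMap.compr₂ φ)
    obtain ⟨x, hx⟩ := ih ψ
    refine ⟨x, fun ⟨p, hpow⟩ => ?_⟩
    have hmul := hpow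
    rw [pow_succ] at hmul
    induction hmul using Submodule.mul_induction_on' with
    | mem_mul_mem q hq r hr =>
      exact (hψ ⟨q, hq⟩ ⟨r, hr⟩).trans (by rw [hx, smul_smul, mul_comm])
    | add p hp q hq ihp ihq =>
      rw [← pow_succ] at hp hq
      exact (map_add φ ⟨p, hp⟩ ⟨q, hq⟩).trans (by rw [ihp hp, ihq hq, ← add_smul])

end ExtendsToRing

section LocalCohomology

open CategoryTheory Limits Opposite localCohomology

universe u

variable {R : Type u} [CommRing R]

/-- The projection `R/J' ⟶ R/J` for ideals `J' ≤ J`. -/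
abbrev quotientProj {J' J : Ideal R} (h : J' ≤ J) :
    ModuleCat.of R (R ⧸ J') ⟶ ModuleCat.of R (R ⧸ J) :=
  ModuleCat.ofHom (Submodule.mapQ _ _ LinearMap.id h)

/-- The cocone with apex `Hⁱ_J(M)` over the modules `Extⁱ(R/Jᵗ, M)`. -/
abbrev localCohomologyCocone (J : Ideal R) (M : ModuleCat.{u} R) (i : ℕ) :
    Cocone (diagram (idealPowersDiagram J) i ⋙ (evaluation _ _).obj M) :=
  ((evaluation _ _).obj M).mapCocone (colimit.cocone (diagram (idealPowersDiagram J) i))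

/-- `Hⁱ_J(M)` is the colimit of the modules `Extⁱ(R/Jᵗ, M)`: colimits of functors are computed
pointwise. -/
def localCohomologyIsColimit (J : Ideal R) (M : ModuleCat.{u} R) (i : ℕ) :
    IsColimit (localCohomologyCocone J M i) :=
  isColimitOfPreserves _ (colimit.isColimit _)

instance preservesFilteredColimitsOfSize_forget_moduleCat :
    PreservesFilteredColimitsOfSize.{0, 0} (forget (ModuleCat.{u} R)) :=
  preservesSmallestFilteredColimits_of_preservesFilteredColimits (forget (ModuleCat.{u} R))

lemma nontrivial_localCohomology_iff (J : Ideal R) (M : ModuleCat.{u} R) (i : ℕ) :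
    Nontrivial ((localCohomology J i).obj M) ↔
      ∃ (s : ℕ) (e : ((Ext R (ModuleCat.{u} R) i).obj (op (ModuleCat.of R (R ⧸ J ^ s)))).obj M),
        ∀ (t : ℕ) (h : s ≤ t), ((Ext R (ModuleCat.{u} R) i).map
          (quotientProj (Ideal.pow_le_pow_right (I := J) h)).op).app M e ≠ 0 := by
  let c := localCohomologyCocone J M i
  constructor
  · intro hnontriv
    obtain ⟨x, hx⟩ := exists_ne (0 : (localCohomology J i).obj M)
    obtain ⟨s, e, rfl⟩ := Concrete.isColimit_exists_rep _ (localCohomologyIsColimit J M i) x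
    refine ⟨s.unop.unop, e, fun t h he => hx ?_⟩
    rw [← ConcreteCategory.congr_hom (c.w (show s ⟶ op (op t) from (homOfLE h).op.op)) e]
    exact (congrArg (c.ι.app (op (op t))) he).trans (map_zero (c.ι.app (op (op t))).hom)
  · rintro ⟨s, e, he⟩
    by_contra htriv
    rw [not_nontrivial_iff_subsingleton] at htriv
    obtain ⟨t, a, b, hab⟩ := Concrete.isColimit_exists_of_rep_eq _
      (localCohomologyIsColimit J M i) (i := op (op s)) (j := op (op s)) e
      (0 : ((Ext R (ModuleCat.{u} R) i).obj (op (ModuleCat.of R (R ⧸ J ^ s)))).obj M)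
      (htriv.elim _ _)
    exact he _ a.unop.unop.le (Eq.trans hab (map_zero
      ((diagram (idealPowersDiagram J) i ⋙ (evaluation _ _).obj M).map b).hom))

variable {J : Ideal R} {M : Type u} [AddCommGroup M] [Module R M]

lemma not_nontrivial_localCohomology_zero (h : Submodule.torsionBySet R M (J : Set R) = ⊥) :
    ¬ Nontrivial ((localCohomology J 0).obj (ModuleCat.of R M)) := by
  rw [nontrivial_localCohomology_iff]
  rintro ⟨s, e, he⟩
  have hom_eq_zero (f : ModuleCat.of R (R ⧸ J ^ s) ⟶ ModuleCat.of R M) : f = 0 := by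
    have apply_one_mem :
        f (1 : R ⧸ J ^ s) ∈ Submodule.torsionBySet R M ((J ^ s : Ideal R) : Set R) := by
      rw [Submodule.mem_torsionBySet_iff]
      rintro ⟨r, hr⟩
      have : (r • 1 : R ⧸ J ^ s) = 0 := by
        rw [Algebra.smul_def, mul_one]
        exact Ideal.Quotient.eq_zero_iff_mem.2 hr
      exact (map_smul f.hom r 1).symm.trans (by rw [this, map_zero])
    rw [torsionBySet_pow_eq_bot h, Submodule.mem_bot] at apply_one_mem
    ext
    exact apply_one_mem
  exact he s le_rfl (by rw [ext_zero_eq_zero hom_eq_zero e, map_zero])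

variable (J) in
/-- The short exact sequence `0 ⟶ J ⟶ R ⟶ R/J ⟶ 0`. -/
abbrev idealShortComplex : ShortComplex (ModuleCat.{u} R) :=
  ShortComplex.mk (ModuleCat.ofHom (Submodule.subtype J)) (ModuleCat.ofHom (Submodule.mkQ J))
    (by ext r; exact Ideal.Quotient.eq_zero_iff_mem.2 r.2)

variable (J) in
lemma idealShortComplex_shortExact : (idealShortComplex J).ShortExact where
  exact := (ShortComplex.ShortExact.moduleCat_exact_iff_function_exact _).2
    (LinearMap.exact_subtype_mkQ J)
  mono_f := (ModuleCat.mono_iff_injective _).2 J.injective_subtype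
  epi_g := (ModuleCat.epi_iff_surjective _).2 J.mkQ_surjective

instance projective_idealShortComplex_X₂ : Projective (idealShortComplex J).X₂ :=
  inferInstanceAs (Projective (ModuleCat.of R R))

/-- The map `(J' ⟶ R ⟶ R/J') ⟶ (J ⟶ R ⟶ R/J)` for ideals `J' ≤ J`. -/
abbrev idealShortComplexMap {J' J : Ideal R} (h : J' ≤ J) :
    idealShortComplex J' ⟶ idealShortComplex J where
  τ₁ := ModuleCat.ofHom (Submodule.inclusion h)
  τ₂ := 𝟙 _
  τ₃ := quotientProj h

lemma exists_subtype_comp_eq_iff_extendsToRing (φ : J →ₗ[R] M) :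
    (∃ ψ : (idealShortComplex J).X₂ ⟶ ModuleCat.of R M,
      (idealShortComplex J).f ≫ ψ = ModuleCat.ofHom φ) ↔ ExtendsToRing φ := by
  constructor
  · rintro ⟨ψ, hψ⟩
    refine ⟨ψ (1 : R), fun r => ?_⟩
    have h := ConcreteCategory.congr_hom hψ r
    rw [← map_smul, smul_eq_mul, mul_one]
    exact h.symm
  · rintro ⟨x, hx⟩
    refine ⟨ModuleCat.ofHom (LinearMap.toSpanSingleton R M x), ?_⟩
    ext r
    exact (hx r).symm

lemma map_connectingClass_ideal_eq_zero_iff {J' : Ideal R} (h : J' ≤ J)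
    (P : ProjectiveResolution (idealShortComplex J).X₁) (φ : J →ₗ[R] M) :
    ((Ext R (ModuleCat.{u} R) 1).map (quotientProj h).op).app (ModuleCat.of R M)
        (connectingClass R (idealShortComplex_shortExact J) P (ModuleCat.ofHom φ)) = 0 ↔
      ExtendsToRing (φ ∘ₗ Submodule.inclusion h) := by
  rw [← exists_subtype_comp_eq_iff_extendsToRing, ← connectingClass_eq_zero_iff (R := R)
    (idealShortComplex_shortExact J') (ProjectiveResolution.of _)]
  exact Eq.congr_left (map_connectingClass _ P _ _ (idealShortComplexMap h) (ModuleCat.ofHom φ))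

lemma nontrivial_localCohomology_one_iff :
    Nontrivial ((localCohomology J 1).obj (ModuleCat.of R M)) ↔
      ∃ (s : ℕ) (φ : ↥(J ^ s) →ₗ[R] M), ∀ (t : ℕ) (h : s ≤ t),
        ¬ ExtendsToRing (φ ∘ₗ Submodule.inclusion (Ideal.pow_le_pow_right h)) := by
  rw [nontrivial_localCohomology_iff]
  refine exists_congr fun s => ?_
  let P := ProjectiveResolution.of (idealShortComplex (J ^ s)).X₁
  have hS := idealShortComplex_shortExact (J ^ s)
  constructor
  · rintro ⟨e, he⟩
    obtain ⟨φ, rfl⟩ := exists_connectingClass_eq hS P e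
    exact ⟨φ.hom, fun t h hφ => he t h ((map_connectingClass_ideal_eq_zero_iff _ P φ.hom).2 hφ)⟩
  · rintro ⟨φ, hφ⟩
    exact ⟨connectingClass R hS P (ModuleCat.ofHom φ), fun t h h0 =>
      hφ t h ((map_connectingClass_ideal_eq_zero_iff _ P φ).1 h0)⟩

lemma not_nontrivial_localCohomology_bot_one :
    ¬ Nontrivial ((localCohomology (⊥ : Ideal R) 1).obj (ModuleCat.of R M)) := by
  rw [nontrivial_localCohomology_one_iff]
  rintro ⟨s, φ, hφ⟩
  refine hφ (s + 1) s.le_succ ⟨0, fun r => ?_⟩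
  obtain rfl : r = 0 := Subtype.ext (by simpa using r.2)
  rw [map_zero, smul_zero]

end LocalCohomology

section EdgeIdeal

open Finsupp (single)

variable {k σ : Type} [Field k] {Γ : SimpleGraph σ}

variable (Γ) in
/-- The exponent vector `b` has independent support; these are the monomials outside the edge
ideal. -/
def IndepSupport (b : σ →₀ ℕ) : Prop :=
  Γ.IsIndepSet (b.support : Set σ)

lemma indepSupport_iff {b : σ →₀ ℕ} :
    IndepSupport Γ b ↔ ∀ i j, b i ≠ 0 → b j ≠ 0 → ¬ Γ.Adj i j := by
  simp only [IndepSupport, SimpleGraph.IsIndepSet, Set.Pairwise, SetLike.mem_coe,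
    Finsupp.mem_support_iff]
  exact ⟨fun h i j hi hj hij => h hi hj hij.ne hij, fun h i hi j hj _ => h i j hi hj⟩

lemma IndepSupport.mono {b b' : σ →₀ ℕ} (hb : IndepSupport Γ b) (h : ∀ i, b i = 0 → b' i = 0) :
    IndepSupport Γ b' :=
  indepSupport_iff.2 fun i j hi hj =>
    indepSupport_iff.1 hb i j (mt (h i) hi) (mt (h j) hj)

lemma indepSupport_single (i : σ) (t : ℕ) : IndepSupport Γ (single i t) := by
  refine indepSupport_iff.2 fun j l hj hl => ?_
  obtain rfl : i = j := by_contra fun h => hj (Finsupp.single_eq_of_ne' h)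
  obtain rfl : i = l := by_contra fun h => hl (Finsupp.single_eq_of_ne' h)
  exact Γ.irrefl

lemma indepSupport_single_add_single {i j : σ} (h : ¬ Γ.Adj i j) :
    IndepSupport Γ (single i 1 + single j 1) := by
  classical
  refine indepSupport_iff.2 fun a b ha hb hab => ?_
  simp only [Finsupp.add_apply, Finsupp.single_apply] at ha hb
  grind [SimpleGraph.Adj.symm, SimpleGraph.irrefl]

lemma IndepSupport.add_single {b : σ →₀ ℕ} (hb : IndepSupport Γ b) {j : σ} (hj : b j ≠ 0) :
    IndepSupport Γ (b + single j 1) := by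
  refine hb.mono fun i hi => ?_
  have hji : j ≠ i := fun h => hj (h ▸ hi)
  rw [Finsupp.add_apply, hi, Finsupp.single_eq_of_ne' hji, add_zero]

lemma IndepSupport.exists_add_single {b : σ →₀ ℕ} (hb : IndepSupport Γ b) (j₀ : σ) :
    ∃ j, (b j ≠ 0 ∨ j = j₀) ∧ IndepSupport Γ (b + single j 1) := by
  by_cases h : b = 0
  · exact ⟨j₀, .inr rfl, by simpa [h] using indepSupport_single j₀ 1⟩
  · obtain ⟨j, hj⟩ := Finsupp.ne_iff.1 h
    exact ⟨j, .inl hj, hb.add_single hj⟩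

lemma exists_adj_single_add_single_le_iff {b : σ →₀ ℕ} :
    (∃ i j, Γ.Adj i j ∧ single i 1 + single j 1 ≤ b) ↔ ¬ IndepSupport Γ b := by
  simp only [indepSupport_iff, not_forall, not_not, exists_prop]
  refine exists₂_congr fun i j => ?_
  have le_iff (hij : Γ.Adj i j) : single i 1 + single j 1 ≤ b ↔ b i ≠ 0 ∧ b j ≠ 0 := by
    classical
    have := hij.ne
    simp only [Finsupp.le_def, Finsupp.add_apply, Finsupp.single_apply]
    grind
  grind

lemma edgeIdeal_eq_span_monomial : edgeIdeal k Γ = Ideal.span ((fun s => monomial s (1 : k)) ''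
    {s | ∃ i j, Γ.Adj i j ∧ s = single i 1 + single j 1}) := by
  unfold edgeIdeal
  congr 1
  ext p
  simp only [X, monomial_mul, mul_one, Set.mem_image, Set.mem_ofPred_eq]
  grind

lemma mem_edgeIdeal_iff {p : MvPolynomial σ k} :
    p ∈ edgeIdeal k Γ ↔ ∀ b, IndepSupport Γ b → coeff b p = 0 := by
  rw [edgeIdeal_eq_span_monomial, mem_ideal_span_monomial_image]
  refine forall_congr' fun b => ?_
  have := exists_adj_single_add_single_le_iff (Γ := Γ) (b := b)
  grind

lemma coeff_zero_eq_zero_of_X_pow_mul_mem {p : MvPolynomial σ k} {i : σ} {t : ℕ}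
    (h : X i ^ t * p ∈ edgeIdeal k Γ) : coeff 0 p = 0 := by
  have := mem_edgeIdeal_iff.1 h _ (indepSupport_single i t)
  rwa [X_pow_eq_monomial, coeff_monomial_mul', if_pos le_rfl, tsub_self, one_mul] at this

lemma mem_edgeIdeal_of_forall_mul_X_mem [Nonempty σ] {p : MvPolynomial σ k}
    (h : ∀ i, p * X i ∈ edgeIdeal k Γ) : p ∈ edgeIdeal k Γ := by
  refine mem_edgeIdeal_iff.2 fun b hb => ?_
  obtain ⟨j, -, hj⟩ := hb.exists_add_single (Classical.arbitrary σ)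
  have := mem_edgeIdeal_iff.1 (h j) _ hj
  rwa [coeff_mul_X] at this

lemma X_mem_maxIdeal (i : σ) : X i ∈ maxIdeal k σ :=
  Ideal.subset_span ⟨i, rfl⟩

lemma torsionBySet_maxIdeal_eq_bot [Nonempty σ] :
    Submodule.torsionBySet (MvPolynomial σ k) (MvPolynomial σ k ⧸ edgeIdeal k Γ)
      (maxIdeal k σ : Set (MvPolynomial σ k)) = ⊥ := by
  refine (Submodule.eq_bot_iff _).2 fun x hx => ?_
  obtain ⟨p, rfl⟩ := Ideal.Quotient.mk_surjective x
  refine Ideal.Quotient.eq_zero_iff_mem.2 (mem_edgeIdeal_of_forall_mul_X_mem fun i => ?_)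
  rw [mul_comm]
  exact Ideal.Quotient.eq_zero_iff_mem.1
    ((Submodule.mem_torsionBySet_iff _ _).1 hx ⟨X i, X_mem_maxIdeal i⟩)

variable (Γ) in
/-- `Γ` is the join of two graphs on nonempty vertex sets `A` and `B`. -/
def IsJoin : Prop :=
  ∃ A B : Set σ, A.Nonempty ∧ B.Nonempty ∧ Disjoint A B ∧
    A ∪ B = Set.univ ∧ ∀ a ∈ A, ∀ b ∈ B, Γ.Adj a b

lemma eq_of_not_isJoin (hΓ : ¬ IsJoin Γ) {α : Type*} {f : σ → α}
    (hf : ∀ i j, ¬ Γ.Adj i j → f i = f j) (i j : σ) : f i = f j := by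
  by_contra hij
  refine hΓ ⟨{l | f l = f i}, {l | f l = f i}ᶜ, ⟨i, rfl⟩, ⟨j, Ne.symm hij⟩, disjoint_compl_right,
    Set.union_compl_self _, fun a ha b hb => ?_⟩
  by_contra hab
  exact hb ((hf a b hab).symm.trans ha)

section Gluing

variable {h : σ → MvPolynomial σ k}

lemma coeff_add_single_eq (hh : ∀ i j, h i * X j - h j * X i ∈ edgeIdeal k Γ) {b : σ →₀ ℕ}
    {i j : σ} (hb : IndepSupport Γ (b + single i 1 + single j 1)) :
    coeff (b + single i 1) (h i) = coeff (b + single j 1) (h j) := by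
  have key := mem_edgeIdeal_iff.1 (hh i j) _ hb
  rwa [coeff_sub, coeff_mul_X, add_right_comm, coeff_mul_X, sub_eq_zero] at key

lemma coeff_eq_zero_of_apply_eq_zero [Nontrivial σ]
    (hh : ∀ i j, h i * X j - h j * X i ∈ edgeIdeal k Γ) {b : σ →₀ ℕ} (hb : IndepSupport Γ b)
    {i : σ} (hi : b i = 0) : coeff b (h i) = 0 := by
  classical
  obtain ⟨j₀, hj₀⟩ := exists_ne i
  obtain ⟨j, hj, hbj⟩ := hb.exists_add_single j₀
  have hji : j ≠ i := by
    rintro rfl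
    exact hj.elim (· hi) (hj₀ ·.symm)
  have key := mem_edgeIdeal_iff.1 (hh i j) _ hbj
  have hmem : i ∉ (b + single j 1).support := by
    rw [Finsupp.notMem_support_iff, Finsupp.add_apply, hi, Finsupp.single_eq_of_ne' hji, add_zero]
  rwa [coeff_sub, coeff_mul_X, coeff_mul_X', if_neg hmem, sub_zero] at key

lemma exists_forall_coeff_add_single_eq (hΓ : ¬ IsJoin Γ)
    (hh : ∀ i j, h i * X j - h j * X i ∈ edgeIdeal k Γ) (b : σ →₀ ℕ) :
    ∃ c, ∀ i, IndepSupport Γ (b + single i 1) → coeff (b + single i 1) (h i) = c := by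
  by_cases hb : b = 0
  -- This is the only degree in which `Γ` not being a join matters: for `b ≠ 0`, any vertex of
  -- the support of `b` compares the coefficients for all `i`.
  · subst hb
    have hconst := eq_of_not_isJoin hΓ fun i j hij => coeff_add_single_eq hh (b := 0)
      (by rw [zero_add]; exact indepSupport_single_add_single hij)
    exact (isEmpty_or_nonempty σ).elim (fun _ => ⟨0, isEmptyElim⟩)
      fun ⟨j⟩ => ⟨_, fun i _ => hconst i j⟩
  · obtain ⟨l, hl⟩ := Finsupp.ne_iff.1 hb
    exact ⟨_, fun i hi => coeff_add_single_eq hh (j := l) (hi.add_single fun h =>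
      hl (Nat.eq_zero_of_add_eq_zero_right h))⟩

lemma exists_forall_coeff_add_single_eq_coeff [Finite σ] (hΓ : ¬ IsJoin Γ)
    (hh : ∀ i j, h i * X j - h j * X i ∈ edgeIdeal k Γ) :
    ∃ H : MvPolynomial σ k, ∀ b i, IndepSupport Γ (b + single i 1) →
      coeff (b + single i 1) (h i) = coeff b H := by
  classical
  have := Fintype.ofFinite σ
  choose c hc using exists_forall_coeff_add_single_eq hΓ hh
  let T : Finset (σ →₀ ℕ) := Finset.univ.biUnion fun i => (h i).support.image (· - single i 1)
  refine ⟨∑ b ∈ T, monomial b (c b), fun b i hb => ?_⟩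
  rw [coeff_sum, Finset.sum_congr rfl fun _ _ => coeff_monomial _ _ _, Finset.sum_ite_eq']
  split_ifs with hT
  · exact hc b i hb
  · by_contra hne
    exact hT (Finset.mem_biUnion.2 ⟨i, Finset.mem_univ i, Finset.mem_image.2
      ⟨_, mem_support_iff.2 hne, add_tsub_cancel_right _ _⟩⟩)

lemma exists_forall_sub_mul_X_mem [Finite σ] [Nontrivial σ] (hΓ : ¬ IsJoin Γ)
    (hh : ∀ i j, h i * X j - h j * X i ∈ edgeIdeal k Γ) :
    ∃ H : MvPolynomial σ k, ∀ i, h i - H * X i ∈ edgeIdeal k Γ := by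
  classical
  obtain ⟨H, hH⟩ := exists_forall_coeff_add_single_eq_coeff hΓ hh
  refine ⟨H, fun i => mem_edgeIdeal_iff.2 fun b hb => ?_⟩
  rw [coeff_sub, coeff_mul_X', sub_eq_zero]
  split_ifs with hi
  · have hle : single i 1 ≤ b :=
      Finsupp.single_le_iff.2 (Nat.one_le_iff_ne_zero.2 (Finsupp.mem_support_iff.1 hi))
    rw [← hH _ i (by rwa [tsub_add_cancel_of_le hle]), tsub_add_cancel_of_le hle]
  · exact coeff_eq_zero_of_apply_eq_zero hh hb (Finsupp.notMem_support_iff.1 hi)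

end Gluing

lemma extendsToRing_maxIdeal [Finite σ] [Nontrivial σ] (hΓ : ¬ IsJoin Γ)
    (φ : maxIdeal k σ →ₗ[MvPolynomial σ k] MvPolynomial σ k ⧸ edgeIdeal k Γ) :
    ExtendsToRing φ := by
  let x (i : σ) : maxIdeal k σ := ⟨X i, X_mem_maxIdeal i⟩
  choose h hφ using fun i => Ideal.Quotient.mk_surjective (φ (x i))
  have hh (i j : σ) : h i * X j - h j * X i ∈ edgeIdeal k Γ := by
    rw [← Ideal.Quotient.mk_eq_mk_iff_sub_mem, mul_comm, mul_comm (h j), map_mul, map_mul, hφ, hφ]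
    calc (X j : MvPolynomial σ k) • φ (x i)
      _ = φ ((X j : MvPolynomial σ k) • x i) := (map_smul _ _ _).symm
      _ = φ ((X i : MvPolynomial σ k) • x j) := congrArg φ (Subtype.ext (mul_comm _ _))
      _ = (X i : MvPolynomial σ k) • φ (x j) := map_smul _ _ _
  obtain ⟨H, hH⟩ := exists_forall_sub_mul_X_mem hΓ hh
  refine extendsToRing_span_range φ (x := Ideal.Quotient.mk _ H) fun i => ?_
  exact (hφ i).symm.trans ((Ideal.Quotient.mk_eq_mk_iff_sub_mem (h i) (X i * H)).2
    (mul_comm H (X i) ▸ hH i))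

section Join

variable {A B : Set σ}

lemma span_X_image_mul_span_X_image_le (hAB : ∀ a ∈ A, ∀ b ∈ B, Γ.Adj a b) :
    Ideal.span (X '' A) * Ideal.span (X '' B) ≤ edgeIdeal k Γ := by
  rw [Ideal.span_mul_span', Ideal.span_le]
  rintro _ ⟨_, ⟨a, ha, rfl⟩, _, ⟨b, hb, rfl⟩, rfl⟩
  exact Ideal.subset_span ⟨a, b, hAB a ha b hb, rfl⟩

lemma sub_aeval_indicator_X_mem (hAB : A ∪ B = Set.univ) (r : MvPolynomial σ k) :
    r - aeval (A.indicator X) r ∈ Ideal.span (X '' B : Set (MvPolynomial σ k)) := by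
  have mk_comp : (Ideal.Quotient.mkₐ k (Ideal.span (X '' B))).comp (aeval (A.indicator X)) =
      Ideal.Quotient.mkₐ k (Ideal.span (X '' B : Set (MvPolynomial σ k))) := by
    refine algHom_ext fun i => ?_
    rw [AlgHom.comp_apply, aeval_X]
    by_cases hi : i ∈ A
    · rw [Set.indicator_of_mem hi]
    · rw [Set.indicator_of_notMem hi, map_zero]
      have hiB : i ∈ B := (hAB.symm ▸ Set.mem_univ i : i ∈ A ∪ B).resolve_left hi
      exact (Ideal.Quotient.eq_zero_iff_mem.2 (Ideal.subset_span (Set.mem_image_of_mem X hiB))).symm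
  exact (Ideal.Quotient.mk_eq_mk_iff_sub_mem _ _).1 (DFunLike.congr_fun mk_comp r).symm

lemma aeval_indicator_X_mem {p : MvPolynomial σ k} (hp : p ∈ maxIdeal k σ) :
    aeval (A.indicator X) p ∈ Ideal.span (X '' A : Set (MvPolynomial σ k)) := by
  suffices maxIdeal k σ ≤ (Ideal.span (X '' A)).comap (aeval (A.indicator X)) from this hp
  rw [maxIdeal, Ideal.span_le]
  rintro _ ⟨i, rfl⟩
  rw [SetLike.mem_coe, Ideal.mem_comap, aeval_X]
  by_cases hi : i ∈ A
  · rw [Set.indicator_of_mem hi]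
    exact Ideal.subset_span ⟨i, hi, rfl⟩
  · rw [Set.indicator_of_notMem hi]
    exact zero_mem _

lemma exists_linearMap_eq_mk_aeval_indicator (hcover : A ∪ B = Set.univ)
    (hAB : ∀ a ∈ A, ∀ b ∈ B, Γ.Adj a b) :
    ∃ φ : maxIdeal k σ →ₗ[MvPolynomial σ k] MvPolynomial σ k ⧸ edgeIdeal k Γ,
      ∀ p, φ p = Ideal.Quotient.mk _ (aeval (A.indicator X) (p : MvPolynomial σ k)) := by
  let φ (p : maxIdeal k σ) : MvPolynomial σ k ⧸ edgeIdeal k Γ :=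
    Ideal.Quotient.mk _ (aeval (A.indicator X) (p : MvPolynomial σ k))
  have φ_add (p q) : φ (p + q) = φ p + φ q := by
    simp only [φ, Submodule.coe_add, map_add]
  have φ_smul (r : MvPolynomial σ k) (p) : φ (r • p) = r • φ p := by
    refine Eq.symm ((Ideal.Quotient.mk_eq_mk_iff_sub_mem (r * aeval _ p.1) _).2 ?_)
    rw [Submodule.coe_smul, smul_eq_mul, map_mul, ← sub_mul, mul_comm]
    exact span_X_image_mul_span_X_image_le hAB
      (Ideal.mul_mem_mul (aeval_indicator_X_mem p.2) (sub_aeval_indicator_X_mem hcover r))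
  exact ⟨⟨⟨φ, φ_add⟩, φ_smul⟩, fun _ => rfl⟩

end Join

lemma IsJoin.exists_forall_not_extendsToRing (hΓ : IsJoin Γ) :
    ∃ φ : maxIdeal k σ →ₗ[MvPolynomial σ k] MvPolynomial σ k ⧸ edgeIdeal k Γ,
      ∀ {t : ℕ} (ht : t ≠ 0),
        ¬ ExtendsToRing (φ ∘ₗ Submodule.inclusion (Ideal.pow_le_self ht)) := by
  obtain ⟨A, B, ⟨a, ha⟩, ⟨b, hb⟩, hdisj, hcover, hAB⟩ := hΓ
  obtain ⟨φ, hφ⟩ := exists_linearMap_eq_mk_aeval_indicator (k := k) hcover hAB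
  refine ⟨φ, fun {t} ht ⟨x, hx⟩ => ?_⟩
  obtain ⟨g, rfl⟩ := Ideal.Quotient.mk_surjective x
  have sub_mem (i : σ) : A.indicator X i ^ t - X i ^ t * g ∈ edgeIdeal k Γ := by
    have := hx ⟨X i ^ t, Ideal.pow_mem_pow (X_mem_maxIdeal i) t⟩
    rw [LinearMap.comp_apply, hφ, Submodule.coe_inclusion, map_pow, aeval_X] at this
    exact (Ideal.Quotient.mk_eq_mk_iff_sub_mem _ (X i ^ t * g)).1 this
  have coeff_one_sub : coeff 0 (1 - g) = 0 := by
    refine coeff_zero_eq_zero_of_X_pow_mul_mem (Γ := Γ) (i := a) (t := t) ?_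
    simpa only [Set.indicator_of_mem ha, mul_sub, mul_one] using sub_mem a
  have coeff_g : coeff 0 g = 0 := by
    refine coeff_zero_eq_zero_of_X_pow_mul_mem (Γ := Γ) (i := b) (t := t) ?_
    simpa only [Set.indicator_of_notMem (hdisj.notMem_of_mem_right hb), zero_pow ht, zero_sub,
      neg_mem_iff] using sub_mem b
  rw [coeff_sub, coeff_g, sub_zero, coeff_zero_one] at coeff_one_sub
  exact one_ne_zero coeff_one_sub

lemma nontrivial_locCoh_one_of_isJoin (hΓ : IsJoin Γ) :
    Nontrivial (locCoh k (edgeIdeal k Γ) 1) := by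
  obtain ⟨φ, hφ⟩ := hΓ.exists_forall_not_extendsToRing (k := k)
  exact nontrivial_localCohomology_one_iff.2 ⟨1, φ ∘ₗ Submodule.inclusion (pow_one _).le,
    fun t h => hφ (Nat.one_le_iff_ne_zero.1 h)⟩

lemma not_nontrivial_locCoh_one [Finite σ] [Nontrivial σ] (hΓ : ¬ IsJoin Γ) :
    ¬ Nontrivial (locCoh k (edgeIdeal k Γ) 1) := fun h => by
  obtain ⟨s, φ, hφ⟩ := nontrivial_localCohomology_one_iff.1 h
  exact hφ s le_rfl (extendsToRing_pow torsionBySet_maxIdeal_eq_bot (extendsToRing_maxIdeal hΓ) s _)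

lemma not_nontrivial_locCoh_zero [Nonempty σ] : ¬ Nontrivial (locCoh k (edgeIdeal k Γ) 0) :=
  not_nontrivial_localCohomology_zero torsionBySet_maxIdeal_eq_bot

lemma nontrivial_locCoh_one_iff [Finite σ] (hσ : Nat.card σ ≠ 1) :
    Nontrivial (locCoh k (edgeIdeal k Γ) 1) ↔ IsJoin Γ := by
  refine ⟨fun h => ?_, nontrivial_locCoh_one_of_isJoin⟩
  by_contra hΓ
  cases isEmpty_or_nonempty σ
  · have maxIdeal_eq_bot : maxIdeal k σ = ⊥ := by
      rw [maxIdeal, Set.range_eq_empty, Ideal.span_empty]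
    rw [locCoh, maxIdeal_eq_bot] at h
    exact not_nontrivial_localCohomology_bot_one h
  · have : Nontrivial σ := Finite.one_lt_card_iff_nontrivial.1
      (lt_of_le_of_ne Nat.card_pos hσ.symm)
    exact not_nontrivial_locCoh_one hΓ h

end EdgeIdeal

lemma NoIsolated.card_ne_one {σ : Type} {Γ : SimpleGraph σ} (hΓ : NoIsolated Γ) :
    Nat.card σ ≠ 1 := by
  intro h
  obtain ⟨_, ⟨v⟩⟩ := Nat.card_eq_one_iff_unique.1 h
  obtain ⟨u, hvu⟩ := hΓ v
  exact hvu.ne (Subsingleton.elim v u)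

theorem stmt14_general (k : Type) [Field k] {σ : Type} [Finite σ] (Γ : SimpleGraph σ)
    (hσ : Nat.card σ ≠ 1) :
    rDepth k (edgeIdeal k Γ) = 1 ↔
      ∃ A B : Set σ, A.Nonempty ∧ B.Nonempty ∧ Disjoint A B ∧
        A ∪ B = Set.univ ∧ ∀ a ∈ A, ∀ b ∈ B, Γ.Adj a b := by
  rw [← IsJoin, ← nontrivial_locCoh_one_iff (k := k) hσ]
  constructor
  · intro h
    exact h ▸ Nat.sInf_mem (Nat.nonempty_of_sInf_eq_succ h)
  · intro h
    obtain ⟨-, -, ⟨a, -⟩, -⟩ := (nontrivial_locCoh_one_iff hσ).1 h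
    have : Nonempty σ := ⟨a⟩
    have rDepth_mem : Nontrivial (locCoh k (edgeIdeal k Γ) (rDepth k (edgeIdeal k Γ))) :=
      Nat.sInf_mem (s := {i | Nontrivial (locCoh k (edgeIdeal k Γ) i)}) ⟨1, h⟩
    refine le_antisymm (Nat.sInf_le h) (Nat.one_le_iff_ne_zero.2 fun h0 => ?_)
    exact not_nontrivial_locCoh_zero (h0 ▸ rDepth_mem)

/-- `depth R/I = 1` if and only if the vertex set admits a partition
`V = A ⊔ B` into two nonempty sets with every vertex of `A` adjacent to every vertex
of `B`. -/
theorem stmt14 (k : Type) [Field k] (n : ℕ) (Γ : SimpleGraph (Fin n))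
    (hiso : NoIsolated Γ) :
    rDepth k (edgeIdeal k Γ) = 1 ↔
      ∃ A B : Set (Fin n), A.Nonempty ∧ B.Nonempty ∧ Disjoint A B ∧
        A ∪ B = Set.univ ∧ ∀ a ∈ A, ∀ b ∈ B, Γ.Adj a b :=
  stmt14_general k Γ hiso.card_ne_one

end
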